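/- For every γ ≥ 1, the Huber function H_γ : ℝ → ℝ is twice continuously differentiable on ℝ, its derivative h_γ satisfies |h_γ(t)| ≤ 1 for all t, and its second derivative satisfies 0 ≤ H_γ''(t) ≤ γ for all t. -/

import Mathlib

/-- The C² Huber regularization `H_γ` of the absolute value function. -/
noncomputable def huber (γ t : ℝ) : ℝ :=
  let l₁ := (1 / γ) * (1 - 1 / (2 * γ))
  let l₂ := (1 / γ) * (1 + 1 / (2 * γ))
  let F := 1 - (2 * γ + 1) ^ 2 / (8 * γ)
  let G := γ * (2 * γ + 1) / 2
  let C := -γ ^ 3 / 2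
  let D := (γ / 2 - G / 2) * l₁ ^ 2 - F * l₁ - (C / 3) * l₁ ^ 3
  let C₁ := (γ / 2) * l₁ ^ 2 - l₂
  let K := F * (l₂ - l₁) + (G / 2) * (l₂ ^ 2 - l₁ ^ 2) + (C / 3) * (l₂ ^ 3 - l₁ ^ 3)
  if |t| ≤ l₁ then (γ / 2) * t ^ 2
  else if |t| ≤ l₂ then F * |t| + (G / 2) * t ^ 2 + (C / 3) * |t| ^ 3 + D
  else |t| + C₁ + K

/-!
The second derivative of `H_γ` is a trapezoid: it equals `γ` on `[-l₁, l₁]`, vanishes outside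
`[-l₂, l₂]` and is affine in between. A trapezoid is a combination of the four truncated linear
functions `(t ± l₂)⁺`, `(t ± l₁)⁺`, so `H_γ` is, up to an affine function, the same combination of
truncated cubes, and smoothness follows from that of `x ↦ (x⁺) ^ 3`. The trapezoid has values in
`[0, γ]`, so `H_γ'` is monotone; it equals `-1` to the left of `-l₂` and `1` to the right of `l₂`.
-/

theorem hasDerivAt_posPart_pow (n : ℕ) (x : ℝ) :
    HasDerivAt (fun y : ℝ => y⁺ ^ (n + 2)) ((n + 2) * x⁺ ^ (n + 1)) x := by
  refine hasDerivAt_of_hasDerivAt_of_ne' (x := 0) (g := fun y : ℝ => (n + 2) * y⁺ ^ (n + 1))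
    (fun y hy => ?_) (by fun_prop) (by fun_prop) x
  rcases hy.lt_or_gt with hneg | hpos
  · have eventually_zero : (fun z : ℝ => z⁺ ^ (n + 2)) =ᶠ[nhds y] fun _ => 0 := by
      filter_upwards [eventually_lt_nhds hneg] with z hz
      simp [posPart_of_nonpos hz.le]
    simpa [posPart_of_nonpos hneg.le] using
      (hasDerivAt_const y (0 : ℝ)).congr_of_eventuallyEq eventually_zero
  · have eventually_pow : (fun z : ℝ => z⁺ ^ (n + 2)) =ᶠ[nhds y] fun z => z ^ (n + 2) := by
      filter_upwards [eventually_gt_nhds hpos] with z hz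
      rw [posPart_of_nonneg hz.le]
    simpa [posPart_of_nonneg hpos.le] using
      (hasDerivAt_pow (n + 2) y).congr_of_eventuallyEq eventually_pow

theorem contDiff_posPart_pow (n : ℕ) : ContDiff ℝ n (fun x : ℝ => x⁺ ^ (n + 1)) := by
  induction n with
  | zero => exact contDiff_zero.2 (by fun_prop)
  | succ n ih =>
    have deriv_eq : deriv (fun x : ℝ => x⁺ ^ (n + 2)) =
        fun x : ℝ => (n + 2 : ℝ) * x⁺ ^ (n + 1) :=
      funext fun x => (hasDerivAt_posPart_pow n x).deriv
    rw [Nat.cast_succ, contDiff_succ_iff_deriv, deriv_eq]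
    exact ⟨fun x => (hasDerivAt_posPart_pow n x).differentiableAt, by simp,
      contDiff_const.mul ih⟩

/-- The combination of truncated `n`-th powers with knots `-b, -a, a, b` that is a symmetric
trapezoid for `n = 1`. Up to constant factors, those of higher degree are its iterated
antiderivatives vanishing to the left of `-b`. -/
noncomputable def trapezoidSpline (a b : ℝ) (n : ℕ) (t : ℝ) : ℝ :=
  (t + b)⁺ ^ n - (t + a)⁺ ^ n - (t - a)⁺ ^ n + (t - b)⁺ ^ n

section trapezoidSpline

variable {a b : ℝ}

theorem contDiff_trapezoidSpline (a b : ℝ) (n : ℕ) :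
    ContDiff ℝ n (trapezoidSpline a b (n + 1)) := by
  have contDiff_shift (c : ℝ) : ContDiff ℝ n (fun t : ℝ => (t + c)⁺ ^ (n + 1)) :=
    (contDiff_posPart_pow n).comp (contDiff_id.add contDiff_const)
  exact (((contDiff_shift b).sub (contDiff_shift a)).sub (contDiff_shift (-a))).add
    (contDiff_shift (-b))

theorem hasDerivAt_trapezoidSpline (a b : ℝ) (n : ℕ) (t : ℝ) :
    HasDerivAt (trapezoidSpline a b (n + 2)) ((n + 2) * trapezoidSpline a b (n + 1) t) t := by
  have hasDerivAt_shift (c : ℝ) :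
      HasDerivAt (fun s : ℝ => (s + c)⁺ ^ (n + 2)) ((n + 2) * (t + c)⁺ ^ (n + 1)) t :=
    (hasDerivAt_posPart_pow n (t + c)).comp_add_const t c
  refine ((((hasDerivAt_shift b).sub (hasDerivAt_shift a)).sub (hasDerivAt_shift (-a))).add
    (hasDerivAt_shift (-b))).congr_deriv ?_
  simp only [trapezoidSpline, sub_eq_add_neg]
  ring

theorem trapezoidSpline_one_mem_Icc (hab : |a| ≤ b) (t : ℝ) :
    trapezoidSpline a b 1 t ∈ Set.Icc 0 (b - a) := by
  obtain ⟨hba, hab⟩ := abs_le.1 hab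
  simp only [trapezoidSpline, posPart_def, pow_one, Set.mem_Icc]
  grind

theorem monotone_trapezoidSpline_two (hab : |a| ≤ b) : Monotone (trapezoidSpline a b 2) := by
  refine monotone_of_hasDerivAt_nonneg (hasDerivAt_trapezoidSpline a b 0) fun t => ?_
  have := (trapezoidSpline_one_mem_Icc hab t).1
  simp only [Pi.zero_apply, zero_add]
  positivity

theorem trapezoidSpline_eq_zero_of_le_neg (hab : |a| ≤ b) {n : ℕ} (hn : n ≠ 0) {t : ℝ}
    (ht : t ≤ -b) : trapezoidSpline a b n t = 0 := by
  obtain ⟨hba, hab⟩ := abs_le.1 hab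
  simp [trapezoidSpline, posPart_of_nonpos (show t + b ≤ 0 by linarith),
    posPart_of_nonpos (show t + a ≤ 0 by linarith), posPart_of_nonpos (show t - a ≤ 0 by linarith),
    posPart_of_nonpos (show t - b ≤ 0 by linarith), hn]

theorem trapezoidSpline_eq_of_le (hab : |a| ≤ b) (n : ℕ) {t : ℝ} (ht : b ≤ t) :
    trapezoidSpline a b n t = (t + b) ^ n - (t + a) ^ n - (t - a) ^ n + (t - b) ^ n := by
  obtain ⟨hba, hab⟩ := abs_le.1 hab
  rw [trapezoidSpline, posPart_of_nonneg (show 0 ≤ t + b by linarith),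
    posPart_of_nonneg (show 0 ≤ t + a by linarith), posPart_of_nonneg (show 0 ≤ t - a by linarith),
    posPart_of_nonneg (show 0 ≤ t - b by linarith)]

theorem trapezoidSpline_two_mem_Icc (hab : |a| ≤ b) (t : ℝ) :
    trapezoidSpline a b 2 t ∈ Set.Icc 0 (2 * (b ^ 2 - a ^ 2)) := by
  have hmono := monotone_trapezoidSpline_two hab
  constructor
  · calc 0 = trapezoidSpline a b 2 (min t (-b)) :=
          (trapezoidSpline_eq_zero_of_le_neg hab two_ne_zero (min_le_right _ _)).symm
      _ ≤ trapezoidSpline a b 2 t := hmono (min_le_left _ _)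
  · calc trapezoidSpline a b 2 t ≤ trapezoidSpline a b 2 (max t b) := hmono (le_max_left _ _)
      _ = 2 * (b ^ 2 - a ^ 2) := by
          rw [trapezoidSpline_eq_of_le hab 2 (le_max_right _ _)]
          ring

theorem trapezoidSpline_three_neg (a b t : ℝ) :
    trapezoidSpline a b 3 (-t) = trapezoidSpline a b 3 t - 6 * (b ^ 2 - a ^ 2) * t := by
  have posPart_neg_cube (x : ℝ) : (-x)⁺ ^ 3 = x⁺ ^ 3 - x ^ 3 := by
    rcases le_total 0 x with hx | hx
    · simp [posPart_of_nonneg hx, posPart_of_nonpos (neg_nonpos.2 hx)]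
    · rw [posPart_of_nonpos hx, posPart_of_nonneg (neg_nonneg.2 hx)]
      ring
  rw [trapezoidSpline, trapezoidSpline, show -t + b = -(t - b) by ring,
    show -t + a = -(t - a) by ring, show -t - a = -(t + a) by ring,
    show -t - b = -(t + b) by ring]
  simp only [posPart_neg_cube]
  ring

end trapezoidSpline

/-- The threshold `l₁` up to which `huber γ` is quadratic. -/
noncomputable def huberInnerKnot (γ : ℝ) : ℝ := (1 / γ) * (1 - 1 / (2 * γ))

/-- The threshold `l₂` from which on `huber γ` is affine. -/
noncomputable def huberOuterKnot (γ : ℝ) : ℝ := (1 / γ) * (1 + 1 / (2 * γ))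

section huber

variable {γ : ℝ}

theorem huberInnerKnot_nonneg (hγ : 1 / 2 ≤ γ) : 0 ≤ huberInnerKnot γ := by
  have hγ_pos : 0 < γ := by linarith
  have : 1 / (2 * γ) ≤ 1 := (div_le_one (by positivity)).2 (by linarith)
  exact mul_nonneg (one_div_nonneg.2 hγ_pos.le) (sub_nonneg.2 this)

theorem cube_mul_huberOuterKnot_sub_huberInnerKnot (γ : ℝ) :
    γ ^ 3 * (huberOuterKnot γ - huberInnerKnot γ) = γ := by
  rcases eq_or_ne γ 0 with rfl | hγ
  · simp
  · simp only [huberOuterKnot, huberInnerKnot]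
    field_simp
    ring

theorem cube_mul_huberOuterKnot_sq_sub_huberInnerKnot_sq (hγ : γ ≠ 0) :
    γ ^ 3 * (huberOuterKnot γ ^ 2 - huberInnerKnot γ ^ 2) = 2 := by
  simp only [huberOuterKnot, huberInnerKnot]
  field_simp
  ring

theorem abs_huberInnerKnot_le_huberOuterKnot (hγ : 0 ≤ γ) :
    |huberInnerKnot γ| ≤ huberOuterKnot γ := by
  rw [huberInnerKnot, huberOuterKnot, abs_mul, abs_of_nonneg (by positivity : 0 ≤ 1 / γ)]
  gcongr
  exact (abs_sub _ _).trans_eq (by rw [abs_one, abs_of_nonneg (by positivity)])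

theorem huber_neg (γ t : ℝ) : huber γ (-t) = huber γ t := by
  simp only [huber, abs_neg, even_two.neg_pow]

/-- The cubic spline with second derivative `γ ^ 3 * trapezoidSpline l₁ l₂ 1`, slope `-1` to the
left of `-l₂`, and value `0` at the origin if `0 ≤ l₁`. -/
noncomputable def huberSpline (γ t : ℝ) : ℝ :=
  γ ^ 3 / 6 * (trapezoidSpline (huberInnerKnot γ) (huberOuterKnot γ) 3 t
    - (huberOuterKnot γ ^ 3 - huberInnerKnot γ ^ 3)) - t

theorem huberSpline_neg (hγ : γ ≠ 0) (t : ℝ) : huberSpline γ (-t) = huberSpline γ t := by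
  rw [huberSpline, huberSpline, trapezoidSpline_three_neg]
  linear_combination -t * cube_mul_huberOuterKnot_sq_sub_huberInnerKnot_sq hγ

theorem huber_eq_huberSpline_of_nonneg (hγ : 1 / 2 ≤ γ) {t : ℝ} (ht : 0 ≤ t) :
    huber γ t = huberSpline γ t := by
  have hγ_pos : 0 < γ := by linarith
  have hinner := huberInnerKnot_nonneg hγ
  have hle := (le_abs_self _).trans (abs_huberInnerKnot_le_huberOuterKnot hγ_pos.le)
  simp only [huber, huberSpline, trapezoidSpline]
  rw [← huberInnerKnot, ← huberOuterKnot, abs_of_nonneg ht,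
    posPart_of_nonneg (show 0 ≤ t + huberInnerKnot γ by linarith),
    posPart_of_nonneg (show 0 ≤ t + huberOuterKnot γ by linarith)]
  split_ifs with hquadratic hcubic
  · rw [posPart_of_nonpos (sub_nonpos.2 hquadratic),
      posPart_of_nonpos (sub_nonpos.2 (hquadratic.trans hle))]
    simp only [huberInnerKnot, huberOuterKnot]
    field_simp
    ring
  · rw [posPart_of_nonneg (sub_nonneg.2 (le_of_not_ge hquadratic)),
      posPart_of_nonpos (sub_nonpos.2 hcubic)]
    simp only [huberInnerKnot, huberOuterKnot]
    field_simp
    ring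
  · rw [posPart_of_nonneg (sub_nonneg.2 (le_of_not_ge hquadratic)),
      posPart_of_nonneg (sub_nonneg.2 (le_of_not_ge hcubic))]
    simp only [huberInnerKnot, huberOuterKnot]
    field_simp
    ring

theorem huber_eq_huberSpline (hγ : 1 / 2 ≤ γ) : huber γ = huberSpline γ := by
  funext t
  rcases le_total 0 t with ht | ht
  · exact huber_eq_huberSpline_of_nonneg hγ ht
  · rw [← huber_neg, ← huberSpline_neg (by linarith : 0 < γ).ne']
    exact huber_eq_huberSpline_of_nonneg hγ (neg_nonneg.2 ht)

theorem contDiff_huberSpline (γ : ℝ) : ContDiff ℝ 2 (huberSpline γ) :=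
  (contDiff_const.mul ((contDiff_trapezoidSpline _ _ 2).sub contDiff_const)).sub contDiff_id

theorem deriv_huberSpline (γ : ℝ) : deriv (huberSpline γ) = fun t =>
    γ ^ 3 / 2 * trapezoidSpline (huberInnerKnot γ) (huberOuterKnot γ) 2 t - 1 := by
  funext t
  refine (((((hasDerivAt_trapezoidSpline _ _ 1 t).sub_const _).const_mul _).sub
    (hasDerivAt_id t)).congr_deriv ?_).deriv
  push_cast
  ring

theorem deriv_deriv_huberSpline (γ : ℝ) : deriv (deriv (huberSpline γ)) = fun t =>
    γ ^ 3 * trapezoidSpline (huberInnerKnot γ) (huberOuterKnot γ) 1 t := by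
  rw [deriv_huberSpline]
  funext t
  refine ((((hasDerivAt_trapezoidSpline _ _ 0 t).const_mul _).sub_const 1).congr_deriv ?_).deriv
  push_cast
  ring

theorem abs_deriv_huberSpline_le_one (hγ : 0 < γ) (t : ℝ) : |deriv (huberSpline γ) t| ≤ 1 := by
  obtain ⟨hlower, hupper⟩ :=
    trapezoidSpline_two_mem_Icc (abs_huberInnerKnot_le_huberOuterKnot hγ.le) t
  have hγ_cube : 0 ≤ γ ^ 3 / 2 := by positivity
  have hscaled := mul_le_mul_of_nonneg_left hupper hγ_cube
  have hknots := cube_mul_huberOuterKnot_sq_sub_huberInnerKnot_sq hγ.ne'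
  rw [deriv_huberSpline, abs_le]
  constructor <;> linarith [mul_nonneg hγ_cube hlower]

theorem deriv_deriv_huberSpline_mem_Icc (hγ : 0 ≤ γ) (t : ℝ) :
    deriv (deriv (huberSpline γ)) t ∈ Set.Icc 0 γ := by
  obtain ⟨hlower, hupper⟩ :=
    trapezoidSpline_one_mem_Icc (abs_huberInnerKnot_le_huberOuterKnot hγ) t
  rw [deriv_deriv_huberSpline]
  refine ⟨by positivity, ?_⟩
  exact (mul_le_mul_of_nonneg_left hupper (by positivity)).trans_eq
    (cube_mul_huberOuterKnot_sub_huberInnerKnot γ)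

end huber

theorem stmt_7_general (γ : ℝ) (hγ : 1 / 2 ≤ γ) :
    ContDiff ℝ 2 (huber γ) ∧
    (∀ t : ℝ, |deriv (huber γ) t| ≤ 1) ∧
    (∀ t : ℝ, 0 ≤ deriv (deriv (huber γ)) t ∧ deriv (deriv (huber γ)) t ≤ γ) := by
  have hγ_pos : 0 < γ := by linarith
  rw [huber_eq_huberSpline hγ]
  exact ⟨contDiff_huberSpline γ, abs_deriv_huberSpline_le_one hγ_pos,
    deriv_deriv_huberSpline_mem_Icc hγ_pos.le⟩

/-- For every `γ ≥ 1` the Huber function `H_γ` is twice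
continuously differentiable, its derivative `h_γ` satisfies `|h_γ(t)| ≤ 1`, and
its second derivative satisfies `0 ≤ H_γ''(t) ≤ γ` for all `t`. -/
theorem stmt_7 (γ : ℝ) (hγ : 1 ≤ γ) :
    ContDiff ℝ 2 (huber γ) ∧
    (∀ t : ℝ, |deriv (huber γ) t| ≤ 1) ∧
    (∀ t : ℝ, 0 ≤ deriv (deriv (huber γ)) t ∧ deriv (deriv (huber γ)) t ≤ γ) :=
  stmt_7_general γ (by linarith)
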